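/- Let 0 < d < 4/5 with d ≠ 1/2, and let B = ∫₀¹∫₀¹ (1-u)^{2-2d} v^{1-d} (1-v)^{2-3d} (1-uv)^{5d-5} ₂F₁(d,2d-1;2d;u) ₂F₁(1,d;2-d;v) du dv. Then (1/(d-1)) · (Γ(1-2d)/Γ(2-2d)) · B = [Γ(1-d)Γ(2-2d)Γ(3-3d)Γ(4-5d) / ((d-1) Γ(3-2d) Γ(5-5d) Γ(4-4d))] · ₄F₃(1, d, 2-2d, 3-3d; 2-d, 3-2d, 4-4d; 1) + [Γ(1-d)² Γ(2-2d)² Γ(2d-1) Γ(3-3d) / (Γ(d)² Γ(5-5d) (4-5d) Γ(4-4d))] · ₃F₂(2-2d, 3-3d, 4-5d; 4-4d, 5-5d; 1). -/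

import Mathlib

open Real MeasureTheory

/-- Pochhammer symbol `(a)_k = a (a+1) ⋯ (a+k-1)` for real `a`. -/
noncomputable def poch (a : ℝ) (k : ℕ) : ℝ := (ascPochhammer ℝ k).eval a

/-- Gaussian hypergeometric function `₂F₁(a,b;c;z)`. -/
noncomputable def hyp2F1 (a b c z : ℝ) : ℝ :=
  ∑' k : ℕ, (poch a k * poch b k) / poch c k * z ^ k / (Nat.factorial k)

/-- Generalized hypergeometric function `₃F₂(a₁,a₂,a₃;b₁,b₂;z)`. -/
noncomputable def hyp3F2 (a₁ a₂ a₃ b₁ b₂ z : ℝ) : ℝ :=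
  ∑' k : ℕ, (poch a₁ k * poch a₂ k * poch a₃ k) / (poch b₁ k * poch b₂ k) * z ^ k /
    (Nat.factorial k)

/-- Generalized hypergeometric function `₄F₃(a₁,a₂,a₃,a₄;b₁,b₂,b₃;z)`. -/
noncomputable def hyp4F3 (a₁ a₂ a₃ a₄ b₁ b₂ b₃ z : ℝ) : ℝ :=
  ∑' k : ℕ, (poch a₁ k * poch a₂ k * poch a₃ k * poch a₄ k) /
    (poch b₁ k * poch b₂ k * poch b₃ k) * z ^ k / (Nat.factorial k)

noncomputable abbrev mI : Measure ℝ := volume.restrict (Set.Ioo (0:ℝ) 1)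

noncomputable def EI (a b e u : ℝ) : ℝ :=
  ∫ t, t ^ (b - 1) * (1 - t) ^ (e - 1) * (1 - u * t) ^ (-a) ∂mI

lemma ae_mI {p : ℝ → Prop} (h : ∀ x, 0 < x → x < 1 → p x) : ∀ᵐ x ∂mI, p x :=
  ae_restrict_of_forall_mem measurableSet_Ioo (fun x hx => h x hx.1 hx.2)

lemma integral_mI_congr {f g : ℝ → ℝ} (h : ∀ x, 0 < x → x < 1 → f x = g x) :
    ∫ x, f x ∂mI = ∫ x, g x ∂mI := integral_congr_ae (ae_mI h)

lemma beta_int {a b : ℝ} (ha : 0 < a) (hb : 0 < b) :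
    Integrable (fun t : ℝ => t ^ (a - 1) * (1 - t) ^ (b - 1)) mI := by
  have h := Complex.betaIntegral_convergent (u := a) (v := b) (by simpa) (by simpa)
  rw [intervalIntegrable_iff_integrableOn_Ioo_of_le (by simp), IntegrableOn] at h
  have h2 := h.re
  refine h2.congr (ae_mI fun x hx1 hx2 => ?_)
  beta_reduce
  norm_cast
  rw [← Complex.ofReal_cpow, ← Complex.ofReal_cpow, RCLike.re_to_complex,
        Complex.re_mul_ofReal, Complex.ofReal_re]
  all_goals linarith

lemma beta_eval {a b : ℝ} (ha : 0 < a) (hb : 0 < b) :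
    ∫ t, t ^ (a - 1) * (1 - t) ^ (b - 1) ∂mI = ProbabilityTheory.beta a b := by
  have h := Complex.betaIntegral_convergent (u := a) (v := b) (by simpa) (by simpa)
  rw [intervalIntegrable_iff_integrableOn_Ioc_of_le (by simp), IntegrableOn] at h
  rw [ProbabilityTheory.beta_eq_betaIntegralReal a b ha hb,
      Complex.betaIntegral, intervalIntegral.integral_of_le (by norm_num), mI,
      ← integral_Ioc_eq_integral_Ioo, ← RCLike.re_to_complex, ← integral_re h]
  refine setIntegral_congr_fun measurableSet_Ioc fun x ⟨hx1, hx₂⟩ ↦ ?_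
  norm_cast
  rw [← Complex.ofReal_cpow, ← Complex.ofReal_cpow, RCLike.re_to_complex,
        Complex.re_mul_ofReal, Complex.ofReal_re]
  all_goals linarith

lemma poch_zero (a : ℝ) : poch a 0 = 1 := by simp [poch]
lemma poch_succ (a : ℝ) (k : ℕ) : poch a (k + 1) = poch a k * (a + k) := by
  simp [poch, ascPochhammer_succ_eval]

lemma poch_pos {a : ℝ} (ha : 0 < a) (k : ℕ) : 0 < poch a k := ascPochhammer_pos k a ha

lemma Gamma_poch {a : ℝ} (ha : 0 < a) (k : ℕ) : Gamma (a + k) = Gamma a * poch a k := by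
  induction k with
  | zero => simp [poch_zero]
  | succ k ih =>
    have : a + (k + 1 : ℕ) = (a + k) + 1 := by push_cast; ring
    rw [this, Real.Gamma_add_one (by positivity), ih, poch_succ]; ring

lemma poch_one (k : ℕ) : poch 1 k = k.factorial := by
  simp [poch]

lemma poch_succ_div {a : ℝ} (ha : 0 < a) (k : ℕ) : poch a k / poch (a + 1) k = a / (a + k) := by
  have h1 := Gamma_poch ha k
  have h2 := Gamma_poch (a := a + 1) (by linarith) k
  have h3 : a + 1 + k = (a + k) + 1 := by ring
  rw [h3, Real.Gamma_add_one (by positivity), Real.Gamma_add_one (by positivity), h1] at h2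
  have := poch_pos (a := a+1) (by linarith) k
  have g := Gamma_pos_of_pos ha
  have : 0 < a + k := by positivity
  rw [div_eq_div_iff (by positivity) (by positivity)]
  have h4 : Gamma a * (poch a k * (a + k)) = Gamma a * (a * poch (a+1) k) := by linarith
  exact mul_left_cancel₀ g.ne' h4

lemma beta_add {a b : ℝ} (ha : 0 < a) (hb : 0 < b) (k : ℕ) :
    ProbabilityTheory.beta (a + k) b = ProbabilityTheory.beta a b * (poch a k / poch (a + b) k) := by
  have h := Gamma_poch ha k
  have h2 := Gamma_poch (a := a + b) (by linarith) k
  have h3 : a + k + b = a + b + k := by ring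
  unfold ProbabilityTheory.beta
  rw [h3, h, h2]
  have := poch_pos (a := a+b) (by linarith) k
  have g := Gamma_pos_of_pos (s := a + b) (by linarith)
  field_simp

lemma choose_poch (a : ℝ) (k : ℕ) : Ring.choose (a + k - 1) k = poch a k / k.factorial := by
  rw [poch, Ring.choose_eq_smul, Polynomial.descPochhammer_smeval_eq_ascPochhammer,
    show a + k - 1 - k + 1 = a by ring, ← Polynomial.ascPochhammer_smeval_eq_eval]
  simp [div_eq_inv_mul]

lemma binom (a : ℝ) {x : ℝ} (h0 : 0 ≤ x) (h1 : x < 1) :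
    HasSum (fun k : ℕ => poch a k / k.factorial * x ^ k) ((1 - x) ^ (-a)) := by
  have h := (Real.one_div_one_sub_rpow_hasFPowerSeriesOnBall_zero a).hasSum (y := x) (by
    simp [enorm_eq_nnnorm, ← NNReal.coe_lt_coe, abs_of_nonneg h0, h1])
  simp only [FormalMultilinearSeries.ofScalars_apply_eq, zero_add, choose_poch, smul_eq_mul] at h
  rw [Real.rpow_neg (by linarith), ← one_div]
  exact h

lemma hasSum_dom {F f : ℕ → ℝ → ℝ} {G g : ℝ → ℝ}
    (hF : ∀ n, AEStronglyMeasurable (F n) mI)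
    (hb : ∀ n t, 0 < t → t < 1 → |F n t| ≤ f n t)
    (hs : ∀ t, 0 < t → t < 1 → HasSum (fun n => f n t) (g t))
    (hg : Integrable g mI)
    (hS : ∀ t, 0 < t → t < 1 → HasSum (fun n => F n t) (G t)) :
    HasSum (fun n => ∫ t, F n t ∂mI) (∫ t, G t ∂mI) := by
  refine hasSum_integral_of_dominated_convergence f hF (fun n => ae_mI (hb n))
    (ae_mI fun t h0 h1 => (hs t h0 h1).summable) ?_ (ae_mI hS)
  exact hg.congr (ae_mI fun t h0 h1 => ((hs t h0 h1).tsum_eq).symm)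

lemma hasSum_pos {f : ℕ → ℝ → ℝ} {g : ℝ → ℝ}
    (hF : ∀ n, AEStronglyMeasurable (f n) mI)
    (hb : ∀ n t, 0 < t → t < 1 → 0 ≤ f n t)
    (hs : ∀ t, 0 < t → t < 1 → HasSum (fun n => f n t) (g t))
    (hg : Integrable g mI) :
    HasSum (fun n => ∫ t, f n t ∂mI) (∫ t, g t ∂mI) :=
  hasSum_dom hF (fun n t h0 h1 => (abs_of_nonneg (hb n t h0 h1)).le) hs hg hs

lemma rpow_le_aux {a u t : ℝ} (ha : 0 ≤ a) (hu0 : 0 ≤ u) (hu1 : u < 1) (h0 : 0 < t) (h1 : t < 1) :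
    (1 - u * t) ^ (-a) ≤ (1 - u) ^ (-a) := by
  apply Real.rpow_le_rpow_of_nonpos (by linarith) _ (by linarith)
  nlinarith

lemma EI_int {a b e u : ℝ} (ha : 0 ≤ a) (hb : 0 < b) (he : 0 < e) (hu0 : 0 ≤ u) (hu1 : u < 1) :
    Integrable (fun t => t ^ (b - 1) * (1 - t) ^ (e - 1) * (1 - u * t) ^ (-a)) mI := by
  refine ((beta_int hb he).mul_const ((1 - u) ^ (-a))).mono' (by fun_prop) (ae_mI fun t h0 h1 => ?_)
  have h2 : 0 < 1 - t := by linarith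
  have h3 : 0 < 1 - u * t := by nlinarith
  rw [Real.norm_of_nonneg (by positivity)]
  have := rpow_le_aux ha hu0 hu1 h0 h1
  gcongr

lemma EI_nonneg {a b e u : ℝ} (hu0 : 0 ≤ u) (hu1 : u < 1) : 0 ≤ EI a b e u := by
  refine integral_nonneg_of_ae (ae_mI fun t h0 h1 => ?_)
  have h2 : 0 < 1 - t := by linarith
  have h3 : 0 < 1 - u * t := by nlinarith
  simp only [Pi.zero_apply]
  positivity

lemma EI_le {a b e u : ℝ} (ha : 0 ≤ a) (hb : 0 < b) (he : 0 < e) (hu0 : 0 ≤ u) (hu1 : u < 1) :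
    EI a b e u ≤ ProbabilityTheory.beta b e * (1 - u) ^ (-a) := by
  rw [← beta_eval hb he, ← integral_mul_const]
  refine integral_mono_ae (EI_int ha hb he hu0 hu1) ((beta_int hb he).mul_const _)
    (ae_mI fun t h0 h1 => ?_)
  have h2 : 0 < 1 - t := by linarith
  have := rpow_le_aux ha hu0 hu1 h0 h1
  simp only
  gcongr

lemma EI_meas (a b e : ℝ) : Measurable (fun u => EI a b e u) := by
  have : StronglyMeasurable (fun u => EI a b e u) := by
    apply StronglyMeasurable.integral_prod_right (f := fun u t : ℝ =>
      t ^ (b - 1) * (1 - t) ^ (e - 1) * (1 - u * t) ^ (-a))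
    apply Measurable.stronglyMeasurable
    fun_prop
  exact this.measurable

lemma EI_series {a b e u : ℝ} (ha : 0 < a) (hb : 0 < b) (he : 0 < e) (hu0 : 0 ≤ u) (hu1 : u < 1) :
    HasSum (fun k : ℕ => poch a k / k.factorial * ProbabilityTheory.beta (b + k) e * u ^ k)
      (EI a b e u) := by
  have h := hasSum_pos (f := fun k t => poch a k / k.factorial * (u * t) ^ k *
      (t ^ (b - 1) * (1 - t) ^ (e - 1)))
    (g := fun t => t ^ (b - 1) * (1 - t) ^ (e - 1) * (1 - u * t) ^ (-a))
    (fun n => by fun_prop) ?_ ?_ (EI_int ha.le hb he hu0 hu1)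
  · refine h.congr_fun ?_ |> fun h => h
    intro k
    rw [← beta_eval (by positivity) he, mul_right_comm, ← integral_const_mul]
    refine integral_mI_congr fun t h0 h1 => ?_
    rw [show b + k - 1 = (b - 1) + k by ring, Real.rpow_add_natCast h0.ne', mul_pow]
    ring
  · intro k t h0 h1
    have h2 : 0 < 1 - t := by linarith
    have := poch_pos ha k
    positivity
  · intro t h0 h1
    rw [mul_comm (t ^ (b - 1) * (1 - t) ^ (e - 1))]
    exact (binom a (by positivity) (by nlinarith)).mul_right _

lemma mob_invol {u t : ℝ} (hu0 : 0 ≤ u) (hu1 : u < 1) (h0 : 0 < t) (h1 : t < 1) :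
    (1 - (1 - t) / (1 - u * t)) / (1 - u * ((1 - t) / (1 - u * t))) = t := by
  have h3 : 0 < 1 - u * t := by nlinarith
  have h4 : 1 - (1 - t) / (1 - u * t) = t * (1 - u) / (1 - u * t) := by
      rw [eq_div_iff h3.ne', sub_mul, div_mul_cancel₀ _ h3.ne']; ring
  have h5 : 1 - u * ((1 - t) / (1 - u * t)) = (1 - u) / (1 - u * t) := by
      rw [eq_div_iff h3.ne', sub_mul, mul_assoc, div_mul_cancel₀ _ h3.ne']; ring
  rw [h4, h5]
  have h6 : 0 < 1 - u := by linarith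
  rw [div_div_div_cancel_right₀ h3.ne', mul_div_cancel_right₀ _ h6.ne']

lemma mob_mem {u t : ℝ} (hu0 : 0 ≤ u) (hu1 : u < 1) (h0 : 0 < t) (h1 : t < 1) :
    (1 - t) / (1 - u * t) ∈ Set.Ioo (0:ℝ) 1 := by
  have h3 : 0 < 1 - u * t := by nlinarith
  refine ⟨div_pos (by linarith) h3, ?_⟩
  rw [div_lt_one h3]; nlinarith

lemma EI_sub {a b e u : ℝ} (hu0 : 0 ≤ u) (hu1 : u < 1) :
    EI a b e u = (1 - u) ^ (e - a) * EI (b + e - a) e b u := by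
  have him : (fun t : ℝ => (1 - t) / (1 - u * t)) '' Set.Ioo (0:ℝ) 1 = Set.Ioo (0:ℝ) 1 := by
    ext x
    constructor
    · rintro ⟨t, ht, rfl⟩; exact mob_mem hu0 hu1 ht.1 ht.2
    · intro hx
      exact ⟨_, mob_mem hu0 hu1 hx.1 hx.2, mob_invol hu0 hu1 hx.1 hx.2⟩
  have key := integral_image_eq_integral_abs_deriv_smul (s := Set.Ioo (0:ℝ) 1)
    (f := fun t : ℝ => (1 - t) / (1 - u * t)) (f' := fun t => -(1 - u) / (1 - u * t) ^ 2)
    measurableSet_Ioo ?_ ?_ (fun t : ℝ => t ^ (b - 1) * (1 - t) ^ (e - 1) * (1 - u * t) ^ (-a))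
  · rw [him] at key
    unfold EI
    rw [key, ← integral_const_mul]
    refine integral_mI_congr fun t h0 h1 => ?_
    have h3 : 0 < 1 - u * t := by nlinarith
    have h4 : 1 - (1 - t) / (1 - u * t) = t * (1 - u) / (1 - u * t) := by
      rw [eq_div_iff h3.ne', sub_mul, div_mul_cancel₀ _ h3.ne']; ring
    have h5 : 1 - u * ((1 - t) / (1 - u * t)) = (1 - u) / (1 - u * t) := by
      rw [eq_div_iff h3.ne', sub_mul, mul_assoc, div_mul_cancel₀ _ h3.ne']; ring
    have h6 : 0 < 1 - u := by linarith
    have h7 : 0 < 1 - t := by linarith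
    rw [h4, h5, neg_div, abs_neg, abs_of_pos (by positivity), smul_eq_mul,
      Real.div_rpow h7.le h3.le, Real.div_rpow (by positivity) h3.le, Real.div_rpow h6.le h3.le,
      Real.mul_rpow h0.le h6.le]
    have e1 : (1 - u) ^ (e - a) = (1 - u) * (1 - u) ^ (e - 1) * (1 - u) ^ (-a) := by
      rw [show e - a = 1 + (e - 1) + (-a) by ring, Real.rpow_add h6, Real.rpow_add h6, Real.rpow_one]
    have e2 : (1 - u * t) ^ (-(b + e - a)) = 1 / ((1 - u * t) ^ 2 * (1 - u * t) ^ (b - 1) *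
        (1 - u * t) ^ (e - 1) * (1 - u * t) ^ (-a)) := by
      rw [show -(b + e - a) = -(2 + (b - 1) + (e - 1) + (-a)) by ring, Real.rpow_neg h3.le,
        Real.rpow_add h3, Real.rpow_add h3, Real.rpow_add h3, Real.rpow_two, one_div]
    rw [e1, e2]
    generalize 1 - u * t = Y at *
    have p1 : 0 < Y ^ (b - 1) := by positivity
    have p2 : 0 < Y ^ (e - 1) := by positivity
    have p3 : 0 < Y ^ (-a) := by positivity
    generalize Y ^ (b - 1) = Y1 at *
    generalize Y ^ (e - 1) = Y2 at *
    generalize Y ^ (-a) = Y3 at *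
    field_simp
  · intro t ht
    have h3 : 0 < 1 - u * t := by nlinarith [ht.1, ht.2]
    apply HasDerivAt.hasDerivWithinAt
    have h1 : HasDerivAt (fun t : ℝ => 1 - t) (-1) t := by
      simpa using (hasDerivAt_id t).const_sub 1
    have h2 : HasDerivAt (fun t : ℝ => 1 - u * t) (-u) t := by
      simpa using ((hasDerivAt_id t).const_mul u).const_sub 1
    refine (h1.div h2 h3.ne').congr_deriv ?_
    congr 1
    ring
  · intro x hx y hy hxy
    rw [← mob_invol hu0 hu1 hx.1 hx.2, ← mob_invol hu0 hu1 hy.1 hy.2]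
    simp only at hxy
    rw [hxy]

lemma tonelli {f : ℝ → ℝ → ℝ} 
    (hm : AEStronglyMeasurable (Function.uncurry f) (mI.prod mI))
    (h0 : ∀ u v, 0 < u → u < 1 → 0 < v → v < 1 → 0 ≤ f u v)
    (h1 : ∀ u, 0 < u → u < 1 → Integrable (f u) mI)
    (h2 : Integrable (fun u => ∫ v, f u v ∂mI) mI) :
    Integrable (Function.uncurry f) (mI.prod mI) := by
  rw [integrable_prod_iff hm]
  refine ⟨ae_mI h1, h2.congr (ae_mI fun u a b => integral_mI_congr fun v c e => ?_)⟩
  simp [Function.uncurry, abs_of_nonneg (h0 u v a b c e)]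

lemma S_pos {d z : ℝ} (hd0 : 0 < d) (hd1 : d < 1) (hz : 0 < z) :
    HasSum (fun k : ℕ => poch d k / k.factorial / (z + k)) (ProbabilityTheory.beta z (1 - d)) := by
  have hI : ∀ k : ℕ, ∫ t, t ^ (z + k - 1) ∂mI = 1 / (z + k) := by
    intro k
    have : 0 < z + k := by positivity
    have h := beta_eval (a := z + k) (b := 1) this one_pos
    simp only [sub_self, Real.rpow_zero, mul_one] at h
    rw [h, ProbabilityTheory.beta, Real.Gamma_add_one this.ne', Real.Gamma_one]
    have := Gamma_pos_of_pos this
    field_simp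
  rw [← beta_eval hz (by linarith)]
  have h := hasSum_pos (f := fun k t => poch d k / k.factorial * t ^ k * t ^ (z - 1))
    (g := fun t => t ^ (z - 1) * (1 - t) ^ (1 - d - 1))
    (fun n => by fun_prop) ?_ ?_ (beta_int hz (by linarith))
  · refine h.congr_fun ?_ |> fun h => h
    intro k
    rw [div_eq_mul_one_div _ (z + _), ← hI, ← integral_const_mul]
    refine integral_mI_congr fun t h0 h1 => ?_
    rw [show z + k - 1 = (z - 1) + k by ring, Real.rpow_add_natCast h0.ne']
    ring
  · intro k t h0 h1
    have := poch_pos hd0 k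
    positivity
  · intro t h0 h1
    rw [mul_comm, show 1 - d - 1 = - d by ring]
    exact (binom d h0.le h1).mul_right _

lemma beta_one {d : ℝ} (hd1 : d < 1) : ProbabilityTheory.beta 1 (1 - d) = 1 / (1 - d) := by
  have : 0 < 1 - d := by linarith
  rw [ProbabilityTheory.beta, add_comm 1 (1 - d), Real.Gamma_add_one this.ne', Real.Gamma_one]
  have := Gamma_pos_of_pos this
  field_simp

lemma c_tendsto {d : ℝ} (hd0 : 0 < d) (hd1 : d < 1) :
    Filter.Tendsto (fun k : ℕ => poch d k / k.factorial) Filter.atTop (nhds 0) := by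
  have h := (S_pos hd0 hd1 one_pos).mul_left (1 - d)
  rw [beta_one hd1, mul_one_div_cancel (by linarith)] at h
  have h2 := h.tendsto_sum_nat.const_sub 1
  rw [sub_self] at h2
  refine h2.congr fun n => ?_
  induction n with
  | zero => simp [poch_zero]
  | succ n ih =>
    rw [Finset.sum_range_succ, ← sub_sub, ih, poch_succ, Nat.factorial_succ]
    push_cast
    have : (n.factorial : ℝ) ≠ 0 := by positivity
    have : (1 + n : ℝ) ≠ 0 := by positivity
    have : (n + 1 : ℝ) ≠ 0 := by positivity
    field_simp
    ring

lemma S_gen {d z : ℝ} (hd0 : 0 < d) (hd1 : d < 1) (hz : -1 < z) (hz0 : z ≠ 0) (hzd : 0 < z + 1 - d) :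
    HasSum (fun k : ℕ => poch d k / k.factorial / (z + k)) (Gamma z * Gamma (1 - d) / Gamma (z + 1 - d)) := by
  rcases lt_or_gt_of_ne hz0 with hneg | hpos
  swap
  · have := S_pos hd0 hd1 hpos
    unfold ProbabilityTheory.beta at this
    rwa [← add_sub_assoc] at this
  have hS := S_pos hd0 hd1 (show 0 < z + 1 by linarith)
  have hz1 : 0 < z + 1 := by linarith
  have hne : ∀ k : ℕ, z + k ≠ 0 := by
    intro k
    cases k with
    | zero => simpa using hz0
    | succ k => push_cast; have := (k.cast_nonneg : (0:ℝ) ≤ k); exact (by linarith : (0:ℝ) < z + (k + 1)).ne'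
  have hpart : ∀ N : ℕ, ∑ k ∈ Finset.range N, poch d k / k.factorial / (z + k) =
      ((z + 1 - d) * ∑ k ∈ Finset.range N, poch d k / k.factorial / (z + 1 + k)
        + (N / (N + z)) * (poch d N / N.factorial)) / z := by
    intro N
    induction N with
    | zero => simp
    | succ n ih =>
      rw [Finset.sum_range_succ, Finset.sum_range_succ, ih, poch_succ, Nat.factorial_succ]
      push_cast
      have h1 : (n.factorial : ℝ) ≠ 0 := by positivity
      have h2 := hne n
      have h3 : z + 1 + n ≠ 0 := by positivity
      have h4 : (n + z : ℝ) ≠ 0 := by rwa [add_comm]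
      have h5 : (n + 1 + z : ℝ) ≠ 0 := by convert h3 using 1; ring
      have h6 : (n + 1 : ℝ) ≠ 0 := by positivity
      rw [show z + 1 + (n:ℝ) = n + 1 + z by ring, add_comm z n]
      generalize ∑ k ∈ Finset.range n, poch d k / k.factorial / (z + 1 + k) = S
      field_simp
      ring
  have hsum : Summable (fun k : ℕ => poch d k / k.factorial / (z + k)) := by
    rw [← summable_nat_add_iff 1]
    have h1 := ((summable_nat_add_iff 1).mpr hS.summable).mul_left ((z + 2) / (z + 1))
    refine Summable.of_nonneg_of_le (fun k => ?_) (fun k => ?_) h1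
    · have := poch_pos hd0 (k + 1)
      have : 0 < z + ((k + 1 : ℕ) : ℝ) := by push_cast; linarith [(k.cast_nonneg : (0:ℝ) ≤ k)]
      positivity
    · have hp := poch_pos hd0 (k + 1)
      have hk := (k.cast_nonneg : (0:ℝ) ≤ k)
      have h2 : 0 < z + ((k + 1 : ℕ) : ℝ) := by push_cast; linarith
      have h3 : 0 < z + 1 + ((k + 1 : ℕ) : ℝ) := by push_cast; linarith
      have h4 : 1 / (z + ((k + 1 : ℕ) : ℝ)) ≤ (z + 2) / (z + 1) * (1 / (z + 1 + ((k + 1 : ℕ) : ℝ))) := by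
        rw [div_mul_div_comm, div_le_div_iff₀ h2 (by positivity)]
        push_cast
        nlinarith
      have h5 : 0 ≤ poch d (k + 1) / (k + 1).factorial := by positivity
      have := mul_le_mul_of_nonneg_left h4 h5
      calc _ = _ := div_eq_mul_one_div _ _
        _ ≤ _ := this
        _ = _ := by ring
  rw [hsum.hasSum_iff_tendsto_nat]
  have lim := ((hS.tendsto_sum_nat.const_mul (z + 1 - d)).add
    ((tendsto_natCast_div_add_atTop z).mul (c_tendsto hd0 hd1))).div_const z
  refine (lim.congr fun N => (hpart N).symm).trans_eq ?_
  congr 1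
  have hd : 0 < 1 - d := by linarith
  unfold ProbabilityTheory.beta
  rw [Real.Gamma_add_one hz0, show z + 1 + (1 - d) = z + 1 - d + 1 by ring,
    Real.Gamma_add_one hzd.ne']
  have := Gamma_pos_of_pos hzd
  field_simp
  ring

lemma G_eq {d v : ℝ} (hd0 : 0 < d) (hd1 : d < 1) (hv0 : 0 < v) (hv1 : v < 1) :
    hyp2F1 1 d (2 - d) v = (1 - d) * EI d 1 (1 - d) v := by
  have h := (EI_series (a := d) (b := 1) (e := 1 - d) hd0 one_pos (by linarith) hv0.le hv1).mul_left (1 - d)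
  rw [← h.tsum_eq]
  unfold hyp2F1
  congr 1
  ext k
  rw [beta_add one_pos (by linarith), beta_one hd1, show 1 + (1 - d) = 2 - d by ring]
  have : 0 < 1 - d := by linarith
  field_simp

lemma H_eq {d v : ℝ} (hv0 : 0 < v) (hv1 : v < 1) :
    v ^ (1 - d) * EI (2 - 2 * d) (1 - d) 1 v =
      ∫ s, (if s < v then s ^ (-d) * (1 - s) ^ (2 * d - 2) else 0) ∂mI := by
  have h := intervalIntegral.integral_comp_mul_left (a := 0) (b := 1)
    (fun s : ℝ => s ^ (-d) * (1 - s) ^ (2 * d - 2)) hv0.ne'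
  rw [mul_zero, mul_one, intervalIntegral.integral_of_le zero_le_one,
    intervalIntegral.integral_of_le hv0.le, integral_Ioc_eq_integral_Ioo, integral_Ioc_eq_integral_Ioo,
    smul_eq_mul] at h
  have h2 : ∫ s, (if s < v then s ^ (-d) * (1 - s) ^ (2 * d - 2) else 0) ∂mI =
      ∫ s in Set.Ioo 0 v, s ^ (-d) * (1 - s) ^ (2 * d - 2) := by
    have : (fun s : ℝ => (if s < v then s ^ (-d) * (1 - s) ^ (2 * d - 2) else 0)) =
        (Set.Iio v).indicator (fun s => s ^ (-d) * (1 - s) ^ (2 * d - 2)) := by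
      ext s; simp [Set.indicator]
    rw [this, integral_indicator measurableSet_Iio, Measure.restrict_restrict measurableSet_Iio]
    congr 2
    ext s
    simp only [Set.mem_inter_iff, Set.mem_Iio, Set.mem_Ioo]
    constructor
    · rintro ⟨a, b, c⟩; exact ⟨b, a⟩
    · rintro ⟨a, b⟩; exact ⟨b, a, by linarith⟩
  rw [h2]
  have h3 : ∫ s in Set.Ioo 0 v, s ^ (-d) * (1 - s) ^ (2 * d - 2) =
    v * ∫ (x : ℝ) in Set.Ioo 0 1, (v * x) ^ (-d) * (1 - v * x) ^ (2 * d - 2) := by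
    rw [h]; field_simp
  rw [h3, ← integral_const_mul]
  unfold EI
  rw [← integral_const_mul]
  refine integral_mI_congr fun t h0 h1 => ?_
  rw [sub_self, Real.rpow_zero, mul_one, Real.mul_rpow hv0.le h0.le, show 1 - d = 1 + (-d) by ring,
    Real.rpow_add hv0, Real.rpow_one, show 1 + -d - 1 = -d by ring,
    show -(2 - 2 * d) = 2 * d - 2 by ring]
  ring

lemma stepA {d v : ℝ} (hd0 : 0 < d) (hd1 : d < 1) (hv0 : 0 < v) (hv1 : v < 1) :
    v ^ (1 - d) * hyp2F1 1 d (2 - d) v = (1 - d) * (1 - v) ^ (1 - 2 * d) *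
      ∫ s, (if s < v then s ^ (-d) * (1 - s) ^ (2 * d - 2) else 0) ∂mI := by
  rw [G_eq hd0 hd1 hv0 hv1, ← H_eq hv0 hv1, EI_sub hv0.le hv1, show 1 - d - d = 1 - 2 * d by ring,
    show 1 + (1 - d) - d = 2 - 2 * d by ring]
  ring

lemma w_int {p u s : ℝ} (hp : 0 < p) (hu0 : 0 < u) (hu1 : u < 1) (hs0 : 0 < s) (hs1 : s < 1) :
    IntegrableOn (fun v : ℝ => (1 - v) ^ (p - 1) * (1 - u * v) ^ (-(p + 1))) (Set.Ioc s 1) ∧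
    ∫ v in s..1, (1 - v) ^ (p - 1) * (1 - u * v) ^ (-(p + 1)) =
      1 / ((1 - u) * p) * ((1 - s) / (1 - u * s)) ^ p := by
  have hu : 0 < 1 - u := by linarith
  have hden : ∀ v ∈ Set.Icc s 1, 0 < 1 - u * v := fun v hv => by nlinarith [hv.1, hv.2]
  have hc : ContinuousOn (fun v : ℝ => -(1 / ((1 - u) * p) * ((1 - v) / (1 - u * v)) ^ p)) (Set.Icc s 1) := by
    refine (continuousOn_const.mul (ContinuousOn.rpow_const ?_ fun x _ => Or.inr hp.le)).neg
    exact ContinuousOn.div (by fun_prop) (by fun_prop) (fun v hv => (hden v hv).ne')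
  have hder : ∀ v ∈ Set.Ioo s 1, HasDerivAt
      (fun v : ℝ => -(1 / ((1 - u) * p) * ((1 - v) / (1 - u * v)) ^ p))
      ((1 - v) ^ (p - 1) * (1 - u * v) ^ (-(p + 1))) v := by
    intro v hv
    have h3 := hden v ⟨hv.1.le, hv.2.le⟩
    have h4 : 0 < 1 - v := by linarith [hv.2]
    have h1 : HasDerivAt (fun t : ℝ => 1 - t) (-1) v := by
      simpa using (hasDerivAt_id v).const_sub 1
    have h2 : HasDerivAt (fun t : ℝ => 1 - u * t) (-u) v := by
      simpa using ((hasDerivAt_id v).const_mul u).const_sub 1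
    have h5 := (((h1.div h2 h3.ne').rpow_const (p := p) (Or.inl (div_pos h4 h3).ne')).const_mul
      (1 / ((1 - u) * p))).neg
    refine h5.congr_deriv ?_
    simp only [Pi.div_apply]
    rw [Real.div_rpow h4.le h3.le, show -(p + 1) = -(2 + (p - 1)) by ring, Real.rpow_neg h3.le,
      Real.rpow_add h3, Real.rpow_two]
    have p1 : 0 < (1 - u * v) ^ (p - 1) := by positivity
    generalize (1 - u * v) ^ (p - 1) = Y at *
    generalize (1 - v) ^ (p - 1) = Z at *
    rw [show (-1 * (1 - u * v) - (1 - v) * -u) = -(1 - u) by ring]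
    generalize 1 - u * v = W at *
    field_simp
  have hint := intervalIntegral.integrableOn_deriv_of_nonneg hc hder (fun v hv => by
    have h3 := hden v ⟨hv.1.le, hv.2.le⟩
    have h4 : 0 < 1 - v := by linarith [hv.2]
    positivity)
  refine ⟨hint, ?_⟩
  rw [intervalIntegral.integral_eq_sub_of_hasDerivAt_of_le hs1.le hc hder
    ((intervalIntegrable_iff_integrableOn_Ioc_of_le hs1.le).mpr hint)]
  simp [Real.zero_rpow hp.ne']

lemma q_int {p u s c : ℝ} (hp : 0 < p) (hu0 : 0 < u) (hu1 : u < 1) (hs0 : 0 < s) (hs1 : s < 1) :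
    Integrable (fun v : ℝ => (if s < v then c else 0) * ((1 - v) ^ (p - 1) * (1 - u * v) ^ (-(p + 1)))) mI ∧
    ∫ v, (if s < v then c else 0) * ((1 - v) ^ (p - 1) * (1 - u * v) ^ (-(p + 1))) ∂mI =
      c * (1 / ((1 - u) * p) * ((1 - s) / (1 - u * s)) ^ p) := by
  obtain ⟨h1, h2⟩ := w_int hp hu0 hu1 hs0 hs1
  have e : (fun v : ℝ => (if s < v then c else 0) * ((1 - v) ^ (p - 1) * (1 - u * v) ^ (-(p + 1)))) =
      (Set.Ioi s).indicator (fun v => c * ((1 - v) ^ (p - 1) * (1 - u * v) ^ (-(p + 1)))) := by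
    ext v; simp [Set.indicator]
  have e2 : mI.restrict (Set.Ioi s) = volume.restrict (Set.Ioo s 1) := by
    rw [Measure.restrict_restrict measurableSet_Ioi]
    congr 1
    ext v
    simp only [Set.mem_inter_iff, Set.mem_Ioi, Set.mem_Ioo]
    constructor
    · rintro ⟨a, b, c⟩; exact ⟨a, c⟩
    · rintro ⟨a, b⟩; exact ⟨a, by linarith, b⟩
  rw [e]
  constructor
  · rw [integrable_indicator_iff measurableSet_Ioi, IntegrableOn, e2]
    exact (h1.mono_set Set.Ioo_subset_Ioc_self).const_mul c
  · rw [integral_indicator measurableSet_Ioi, e2, integral_const_mul, ← integral_Ioc_eq_integral_Ioo,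
      ← intervalIntegral.integral_of_le hs1.le, h2]

lemma stepB {d u : ℝ} (hd0 : 0 < d) (hd1 : d < 4 / 5) (hu0 : 0 < u) (hu1 : u < 1) :
    Integrable (fun v : ℝ => (1 - u) ^ (2 - 2 * d) * v ^ (1 - d) * (1 - v) ^ (2 - 3 * d) *
        (1 - u * v) ^ (5 * d - 5) * hyp2F1 1 d (2 - d) v) mI ∧
    ∫ v, (1 - u) ^ (2 - 2 * d) * v ^ (1 - d) * (1 - v) ^ (2 - 3 * d) *
        (1 - u * v) ^ (5 * d - 5) * hyp2F1 1 d (2 - d) v ∂mI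
      = (1 - d) / (4 - 5 * d) * EI d (3 - 3 * d) (1 - d) u := by
  have hp : 0 < 4 - 5 * d := by linarith
  have hu : 0 < 1 - u := by linarith
  set q : ℝ → ℝ → ℝ := fun s v => (if s < v then s ^ (-d) * (1 - s) ^ (2 * d - 2) else 0) *
    ((1 - v) ^ (4 - 5 * d - 1) * (1 - u * v) ^ (-(4 - 5 * d + 1))) with hq
  have hqs : ∀ s, 0 < s → s < 1 → ∫ v, q s v ∂mI = 1 / ((1 - u) * (4 - 5 * d)) *
      (s ^ (1 - d - 1) * (1 - s) ^ (3 - 3 * d - 1) * (1 - u * s) ^ (-(4 - 5 * d))) := by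
    intro s h0 h1
    rw [hq, (q_int hp hu0 hu1 h0 h1).2]
    have h4 : 0 < 1 - s := by linarith
    have h3 : 0 < 1 - u * s := by nlinarith
    rw [Real.div_rpow h4.le h3.le, Real.rpow_neg h3.le, show 3 - 3 * d - 1 = (2 * d - 2) + (4 - 5 * d) by ring,
      Real.rpow_add h4, show 1 - d - 1 = -d by ring]
    ring
  have hI := tonelli (f := q) ?_ ?_ ?_ ?_
  · have hv : ∀ v, 0 < v → v < 1 → (1 - u) ^ (2 - 2 * d) * v ^ (1 - d) * (1 - v) ^ (2 - 3 * d) *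
        (1 - u * v) ^ (5 * d - 5) * hyp2F1 1 d (2 - d) v =
        (1 - u) ^ (2 - 2 * d) * (1 - d) * ∫ s, q s v ∂mI := by
      intro v h0 h1
      rw [hq]
      simp only
      rw [integral_mul_const]
      have h4 : 0 < 1 - v := by linarith
      have := stepA hd0 (by linarith) h0 h1
      rw [show 4 - 5 * d - 1 = (1 - 2 * d) + (2 - 3 * d) by ring, Real.rpow_add h4,
        show -(4 - 5 * d + 1) = 5 * d - 5 by ring]
      linear_combination ((1 - u) ^ (2 - 2 * d) * (1 - v) ^ (2 - 3 * d) *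
        (1 - u * v) ^ (5 * d - 5)) * this
    constructor
    · refine (hI.integral_prod_right.const_mul ((1 - u) ^ (2 - 2 * d) * (1 - d))).congr
        (ae_mI fun v h0 h1 => ?_)
      exact (hv v h0 h1).symm
    · rw [integral_mI_congr hv, integral_const_mul, ← integral_integral_swap hI,
        integral_mI_congr hqs, integral_const_mul]
      change _ * (_ * EI (4 - 5 * d) (1 - d) (3 - 3 * d) u) = _
      rw [EI_sub hu0.le hu1, show 1 - d + (3 - 3 * d) - (4 - 5 * d) = d by ring,
        show 3 - 3 * d - (4 - 5 * d) = 1 - (2 - 2 * d) by ring, Real.rpow_sub hu 1, Real.rpow_one]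
      have : 0 < (1 - u) ^ (2 - 2 * d) := by positivity
      field_simp
  · apply Measurable.aestronglyMeasurable
    rw [hq]
    unfold Function.uncurry
    refine Measurable.mul (Measurable.ite (measurableSet_lt (by fun_prop) (by fun_prop)) (by fun_prop) (by fun_prop)) (by fun_prop)
  · intro s v a b c e
    rw [hq]
    have h4 : 0 < 1 - s := by linarith
    have h5 : 0 < 1 - v := by linarith
    have h3 : 0 < 1 - u * v := by nlinarith
    simp only
    split_ifs <;> positivity
  · intro s a b
    exact (q_int hp hu0 hu1 a b).1
  · refine ((EI_int hp.le (show 0 < 1 - d by linarith) (show 0 < 3 - 3 * d by linarith) hu0.le hu1).const_mul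
      (1 / ((1 - u) * (4 - 5 * d)))).congr (ae_mI fun s h0 h1 => (hqs s h0 h1).symm)

lemma poch_shift (a : ℝ) (k : ℕ) : poch a k * (a + k) = a * poch (a + 1) k := by
  induction k with
  | zero => simp [poch_zero]
  | succ k ih =>
    rw [poch_succ, poch_succ, ih]; push_cast; ring

lemma F_term {d : ℝ} (hd0 : 0 < d) (hd2 : d ≠ 1 / 2) (u : ℝ) (k : ℕ) :
    (poch d k * poch (2 * d - 1) k) / poch (2 * d) k * u ^ k / (Nat.factorial k) =
    (2 * d - 1) * (poch d k / k.factorial / (2 * d - 1 + k) * u ^ k) := by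
  have h := poch_shift (2 * d - 1) k
  rw [sub_add_cancel] at h
  have h1 := poch_pos (a := 2 * d) (by linarith) k
  have h2 : 2 * d - 1 + k ≠ 0 := by
    cases k with
    | zero => simp; intro h; apply hd2; linarith
    | succ k => push_cast; have := (k.cast_nonneg : (0:ℝ) ≤ k); exact (by linarith : 0 < 2 * d - 1 + ((k:ℝ) + 1)).ne'
  have h3 : (k.factorial : ℝ) ≠ 0 := by positivity
  field_simp
  linear_combination (poch d k * u ^ k) * h

noncomputable def phi (d u : ℝ) : ℝ := ∑' k : ℕ, poch d k / k.factorial / (2 * d - 1 + k) * u ^ k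

lemma F_eq {d : ℝ} (hd0 : 0 < d) (hd2 : d ≠ 1 / 2) (u : ℝ) :
    hyp2F1 d (2 * d - 1) (2 * d) u = (2 * d - 1) * phi d u := by
  unfold hyp2F1 phi
  rw [← tsum_mul_left]
  congr 1
  ext k
  exact F_term hd0 hd2 u k

lemma phi_sum {d : ℝ} (hd0 : 0 < d) (hd1 : d < 1) (hd2 : d ≠ 1 / 2) :
    HasSum (fun k : ℕ => poch d k / k.factorial / (2 * d - 1 + k))
      (Gamma (2 * d - 1) * Gamma (1 - d) / Gamma d) := by
  have := S_gen (z := 2 * d - 1) hd0 hd1 (by linarith) (fun h => hd2 (by linarith)) (by linarith)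
  rwa [show 2 * d - 1 + 1 - d = d by ring] at this

lemma phi_term_le {d u : ℝ} (h0 : 0 ≤ u) (h1 : u ≤ 1) (k : ℕ) :
    ‖poch d k / k.factorial / (2 * d - 1 + k) * u ^ k‖ ≤ |poch d k / k.factorial / (2 * d - 1 + k)| := by
  rw [norm_mul, Real.norm_eq_abs, Real.norm_of_nonneg (by positivity)]
  exact mul_le_of_le_one_right (abs_nonneg _) (pow_le_one₀ h0 h1)

lemma phi_hasSum {d u : ℝ} (hd0 : 0 < d) (hd1 : d < 1) (hd2 : d ≠ 1 / 2) (h0 : 0 ≤ u) (h1 : u ≤ 1) :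
    HasSum (fun k : ℕ => poch d k / k.factorial / (2 * d - 1 + k) * u ^ k) (phi d u) :=
  (Summable.of_norm_bounded (phi_sum hd0 hd1 hd2).summable.abs (phi_term_le h0 h1)).hasSum

lemma phi_bdd {d u : ℝ} (hd0 : 0 < d) (hd1 : d < 1) (hd2 : d ≠ 1 / 2) (h0 : 0 < u) (h1 : u < 1) :
    ‖phi d u‖ ≤ ∑' k : ℕ, |poch d k / k.factorial / (2 * d - 1 + k)| :=
  tsum_of_norm_bounded (phi_sum hd0 hd1 hd2).summable.abs.hasSum (phi_term_le h0.le h1.le)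

lemma phi_meas {d : ℝ} (hd0 : 0 < d) (hd1 : d < 1) (hd2 : d ≠ 1 / 2) :
    AEStronglyMeasurable (phi d) mI := by
  apply ContinuousOn.aestronglyMeasurable _ measurableSet_Ioo
  exact continuousOn_tsum (fun k => by fun_prop) (phi_sum hd0 hd1 hd2).summable.abs
    (fun k u hu => phi_term_le hu.1.le hu.2.le k)

lemma EI_integrable {d b e g : ℝ} (hd0 : 0 < d) (hd1 : d < 1) (hb : 0 < b) (he : 0 < e) (hg : 0 < g) :
    Integrable (fun u => u ^ (g - 1) * EI d b e u) mI := by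
  refine ((beta_int hg (show 0 < 1 - d by linarith)).mul_const (ProbabilityTheory.beta b e)).mono' ?_
    (ae_mI fun t h0 h1 => ?_)
  · have := EI_meas d b e
    exact Measurable.aestronglyMeasurable (by fun_prop)
  · have := EI_nonneg (a := d) (b := b) (e := e) h0.le h1
    rw [Real.norm_of_nonneg (by positivity), mul_assoc, show 1 - d - 1 = -d by ring]
    have := EI_le hd0.le hb he h0.le h1
    rw [mul_comm ((1 - t) ^ (-d))]
    gcongr

lemma EI_integrable' {d b e : ℝ} (hd0 : 0 < d) (hd1 : d < 1) (hb : 0 < b) (he : 0 < e) :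
    Integrable (fun u => EI d b e u) mI := by
  simpa using EI_integrable hd0 hd1 hb he one_pos

lemma stepC {d M : ℝ} {φ : ℝ → ℝ} (hd0 : 0 < d) (hd1 : d < 4 / 5)
    (hm : AEStronglyMeasurable φ mI) (hM : ∀ u, 0 < u → u < 1 → ‖φ u‖ ≤ M) :
    ∫ v, ∫ u, (1 - u) ^ (2 - 2 * d) * v ^ (1 - d) * (1 - v) ^ (2 - 3 * d) *
        (1 - u * v) ^ (5 * d - 5) * φ u * hyp2F1 1 d (2 - d) v ∂mI ∂mI =
    (1 - d) / (4 - 5 * d) * ∫ u, φ u * EI d (3 - 3 * d) (1 - d) u ∂mI := by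
  have hd : 0 < 1 - d := by linarith
  set k : ℝ → ℝ → ℝ := fun u v => (1 - u) ^ (2 - 2 * d) * v ^ (1 - d) * (1 - v) ^ (2 - 3 * d) *
        (1 - u * v) ^ (5 * d - 5) * ((1 - d) * EI d 1 (1 - d) v) with hk
  have hkv : ∀ u v, 0 < v → v < 1 → (1 - u) ^ (2 - 2 * d) * v ^ (1 - d) * (1 - v) ^ (2 - 3 * d) *
        (1 - u * v) ^ (5 * d - 5) * hyp2F1 1 d (2 - d) v = k u v := by
    intro u v h0 h1
    rw [G_eq hd0 (by linarith) h0 h1]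
  have hkint : ∀ u, 0 < u → u < 1 → ∫ v, k u v ∂mI = (1 - d) / (4 - 5 * d) * EI d (3 - 3 * d) (1 - d) u := by
    intro u h0 h1
    rw [← (stepB hd0 hd1 h0 h1).2]
    exact integral_mI_congr fun v a b => (hkv u v a b).symm
  have hI := tonelli (f := k) ?_ ?_ ?_ ?_
  · have hφ : AEStronglyMeasurable (fun z : ℝ × ℝ => φ z.1) (mI.prod mI) := hm.comp_fst
    have hb : ∀ᵐ z ∂(mI.prod mI), ‖φ z.1‖ ≤ M :=
      Measure.quasiMeasurePreserving_fst.ae (ae_mI hM)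
    have hJ : Integrable (Function.uncurry fun u v => φ u * k u v) (mI.prod mI) :=
      hI.bdd_mul hφ hb
    calc _ = ∫ v, ∫ u, φ u * k u v ∂mI ∂mI := by
            refine integral_mI_congr fun v a b => integral_mI_congr fun u _ _ => ?_
            rw [← hkv u v a b]; ring
      _ = ∫ u, ∫ v, φ u * k u v ∂mI ∂mI := (integral_integral_swap hJ).symm
      _ = ∫ u, (1 - d) / (4 - 5 * d) * (φ u * EI d (3 - 3 * d) (1 - d) u) ∂mI := by
            refine integral_mI_congr fun u a b => ?_
            rw [integral_const_mul, hkint u a b]; ring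
      _ = _ := integral_const_mul _ _
  · have := EI_meas d 1 (1 - d)
    apply Measurable.aestronglyMeasurable
    rw [hk]
    unfold Function.uncurry
    fun_prop
  · intro u v a b c e
    have := EI_nonneg (a := d) (b := 1) (e := 1 - d) c.le e
    have h4 : 0 < 1 - u := by linarith
    have h5 : 0 < 1 - v := by linarith
    have h3 : 0 < 1 - u * v := by nlinarith
    rw [hk]
    positivity
  · intro u h0 h1
    exact (stepB hd0 hd1 h0 h1).1.congr (ae_mI fun v a b => hkv u v a b)
  · exact ((EI_integrable' hd0 (by linarith) (show 0 < 3 - 3 * d by linarith) hd).const_mul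
      ((1 - d) / (4 - 5 * d))).congr (ae_mI fun u h0 h1 => (hkint u h0 h1).symm)

lemma pow_int {z : ℝ} (hz : 0 < z) : ∫ t, t ^ (z - 1) ∂mI = 1 / z := by
  have h := beta_eval (a := z) (b := 1) hz one_pos
  simp only [sub_self, Real.rpow_zero, mul_one] at h
  rw [h, ProbabilityTheory.beta, Real.Gamma_add_one hz.ne', Real.Gamma_one]
  have := Gamma_pos_of_pos hz
  field_simp

lemma npow_int (n : ℕ) : ∫ t, t ^ n ∂mI = 1 / (n + 1 : ℝ) := by
  have h := pow_int (z := n + 1) (by positivity)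
  simpa using h

lemma phi_mom {d : ℝ} (hd0 : 0 < d) (hd1 : d < 1) (hd2 : d ≠ 1 / 2) (n : ℕ) :
    ∫ u, phi d u * u ^ n ∂mI =
      (Gamma (2 * d - 1) * Gamma (1 - d) / Gamma d - ProbabilityTheory.beta (1 + n) (1 - d)) / (2 - 2 * d + n) := by
  have h := hasSum_dom (F := fun k u => poch d k / k.factorial / (2 * d - 1 + k) * u ^ k * u ^ n)
    (f := fun k _ => |poch d k / k.factorial / (2 * d - 1 + k)|)
    (g := fun _ => ∑' k : ℕ, |poch d k / k.factorial / (2 * d - 1 + k)|)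
    (G := fun u => phi d u * u ^ n) (fun k => by fun_prop) ?_ ?_ (integrable_const _) ?_
  · refine h.unique ?_
    have h2 := ((phi_sum hd0 hd1 hd2).sub (S_pos (z := 1 + n) hd0 hd1 (by positivity))).div_const (2 - 2 * d + n)
    refine h2.congr_fun ?_ |> fun h => h
    intro k
    have : ∀ u : ℝ, poch d k / k.factorial / (2 * d - 1 + k) * u ^ k * u ^ n =
       poch d k / k.factorial / (2 * d - 1 + k) * u ^ (k + n) := fun u => by rw [pow_add]; ring
    simp only [this]
    rw [integral_const_mul, npow_int]
    have h2 : 2 * d - 1 + k ≠ 0 := by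
      cases k with
      | zero => simp; intro h; apply hd2; linarith
      | succ k => push_cast; have := (k.cast_nonneg : (0:ℝ) ≤ k); exact (by linarith : 0 < 2 * d - 1 + ((k:ℝ) + 1)).ne'
    have h3 : (k.factorial : ℝ) ≠ 0 := by positivity
    have h4 : (0:ℝ) < 2 - 2 * d + n := by have := (n.cast_nonneg : (0:ℝ) ≤ n); linarith
    have h5 : (1 + n + k : ℝ) ≠ 0 := by positivity
    push_cast
    rw [show (k + n + 1 : ℝ) = 1 + n + k by ring, eq_div_iff h4.ne']
    field_simp
    ring
  · intro k u h0 h1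
    have := phi_term_le (d := d) h0.le h1.le k
    rw [abs_mul, abs_of_nonneg (show 0 ≤ u ^ n by positivity)]
    exact (mul_le_of_le_one_right (abs_nonneg _) (pow_le_one₀ h0.le h1.le)).trans this
  · intro u _ _
    exact (phi_sum hd0 hd1 hd2).summable.abs.hasSum
  · intro u h0 h1
    exact (phi_hasSum hd0 hd1 hd2 h0.le h1.le).mul_right _

lemma J_sum {d : ℝ} (hd0 : 0 < d) (hd1 : d < 1) (hd2 : d ≠ 1 / 2) :
    HasSum (fun n : ℕ => poch d n / n.factorial * ProbabilityTheory.beta (3 - 3 * d + n) (1 - d) *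
      ((Gamma (2 * d - 1) * Gamma (1 - d) / Gamma d - ProbabilityTheory.beta (1 + n) (1 - d)) / (2 - 2 * d + n)))
      (∫ u, phi d u * EI d (3 - 3 * d) (1 - d) u ∂mI) := by
  have hb : 0 < 3 - 3 * d := by linarith
  have he : 0 < 1 - d := by linarith
  have hm := phi_meas hd0 hd1 hd2
  set M := ∑' k : ℕ, |poch d k / k.factorial / (2 * d - 1 + k)| with hM
  have h := hasSum_dom (F := fun n u => phi d u * (poch d n / n.factorial * ProbabilityTheory.beta (3 - 3 * d + n) (1 - d) * u ^ n))
    (f := fun n u => M * (poch d n / n.factorial * ProbabilityTheory.beta (3 - 3 * d + n) (1 - d) * u ^ n))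
    (g := fun u => M * EI d (3 - 3 * d) (1 - d) u)
    (G := fun u => phi d u * EI d (3 - 3 * d) (1 - d) u) (fun k => by fun_prop) ?_ ?_
      ((EI_integrable' hd0 hd1 hb he).const_mul M) ?_
  · refine h.congr_fun ?_ |> fun h => h
    intro n
    rw [← phi_mom hd0 hd1 hd2, ← integral_const_mul]
    exact integral_mI_congr fun u _ _ => by ring
  · intro n u h0 h1
    have h2 := phi_bdd hd0 hd1 hd2 h0 h1
    have h3 := poch_pos hd0 n
    have h4 := ProbabilityTheory.beta_pos (α := 3 - 3 * d + n) (β := 1 - d) (by positivity) he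
    rw [abs_mul, abs_of_nonneg (show 0 ≤ poch d n / n.factorial * ProbabilityTheory.beta (3 - 3 * d + n) (1 - d) * u ^ n by positivity)]
    exact mul_le_mul_of_nonneg_right h2 (by positivity)
  · intro u h0 h1
    exact (EI_series hd0 hb he h0.le h1).mul_left _
  · intro u h0 h1
    exact (EI_series hd0 hb he h0.le h1).mul_left _

lemma EI_mom {a b e g : ℝ} (ha : 0 < a) (hb : 0 < b) (he : 0 < e) (hg : 0 < g)
    (hi : Integrable (fun u => u ^ (g - 1) * EI a b e u) mI) :
    HasSum (fun n : ℕ => poch a n / n.factorial * ProbabilityTheory.beta (b + n) e / (g + n))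
      (∫ u, u ^ (g - 1) * EI a b e u ∂mI) := by
  have h := hasSum_pos (f := fun n u => u ^ (g - 1) * (poch a n / n.factorial * ProbabilityTheory.beta (b + n) e * u ^ n))
    (g := fun u => u ^ (g - 1) * EI a b e u) (fun k => by fun_prop) ?_ ?_ hi
  · refine h.congr_fun ?_ |> fun h => h
    intro n
    rw [div_eq_mul_one_div, ← pow_int (z := g + n) (by positivity), ← integral_const_mul]
    refine integral_mI_congr fun t h0 h1 => ?_
    rw [show g + n - 1 = (g - 1) + n by ring, Real.rpow_add_natCast h0.ne']
    ring
  · intro n u h0 h1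
    have h3 := poch_pos ha n
    have h4 := ProbabilityTheory.beta_pos (α := b + n) (β := e) (by positivity) he
    positivity
  · intro u h0 h1
    exact (EI_series ha hb he h0.le h1).mul_left _

lemma J_eq {d : ℝ} (hd0 : 0 < d) (hd1 : d < 1) (hd2 : d ≠ 1 / 2) :
    ∫ u, phi d u * EI d (3 - 3 * d) (1 - d) u ∂mI =
    Gamma (2 * d - 1) * Gamma (1 - d) / Gamma d * (∫ u, u ^ (2 - 2 * d - 1) * EI d (3 - 3 * d) (1 - d) u ∂mI)
    - ProbabilityTheory.beta (3 - 3 * d) (1 - d) / ((1 - d) * (2 - 2 * d)) *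
      hyp4F3 1 d (2 - 2 * d) (3 - 3 * d) (2 - d) (3 - 2 * d) (4 - 4 * d) 1 := by
  have hb : 0 < 3 - 3 * d := by linarith
  have he : 0 < 1 - d := by linarith
  have hg : 0 < 2 - 2 * d := by linarith
  have h1 := (EI_mom hd0 hb he hg (EI_integrable hd0 hd1 hb he hg)).mul_left (Gamma (2 * d - 1) * Gamma (1 - d) / Gamma d)
  have h2 := h1.sub (J_sum hd0 hd1 hd2)
  rw [eq_sub_iff_add_eq', ← eq_sub_iff_add_eq]
  · rw [← h2.tsum_eq]
    unfold hyp4F3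
    rw [← tsum_mul_left]
    refine tsum_congr fun n => ?_
    have e1 := beta_add (a := 1) (b := 1 - d) one_pos he n
    rw [beta_one hd1, poch_one, show 1 + (1 - d) = 2 - d by ring] at e1
    have e2 := beta_add (a := 3 - 3 * d) (b := 1 - d) hb he n
    rw [show 3 - 3 * d + (1 - d) = 4 - 4 * d by ring] at e2
    have e3 := poch_shift (2 - 2 * d) n
    rw [show 2 - 2 * d + 1 = 3 - 2 * d by ring] at e3
    have p1 := poch_pos (a := 3 - 2 * d) (by linarith) n
    have p2 := poch_pos (a := 2 - d) (by linarith) n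
    have p3 := poch_pos (a := 4 - 4 * d) (by linarith) n
    have p4 : 0 < 2 - 2 * d + n := by positivity
    have e4 : poch (2 - 2 * d) n = (2 - 2 * d) * poch (3 - 2 * d) n / (2 - 2 * d + n) := by
      rw [eq_div_iff p4.ne', e3]
    rw [e1, e2, e4, poch_one, one_pow]
    have h3 : (n.factorial : ℝ) ≠ 0 := by positivity
    have h4 := hg.ne'
    have h5 := he.ne'
    generalize ProbabilityTheory.beta (3 - 3 * d) (1 - d) = b1
    generalize Gamma (2 * d - 1) * Gamma (1 - d) / Gamma d = b2
    clear h1 h2 e1 e2 e3 e4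
    generalize 2 - 2 * d = b3 at *
    generalize poch (3 - 2 * d) n = q1 at *
    generalize poch (2 - d) n = q2 at *
    generalize poch (4 - 4 * d) n = q3 at *
    generalize poch (3 - 3 * d) n = q4 at *
    generalize 1 - d = b5 at *
    field_simp
    ring

lemma EI_symm {a b e u : ℝ} (ha : 0 < a) (hb : 0 < b) (he : 0 < e) (hc : 0 < b + e - a)
    (hu0 : 0 ≤ u) (hu1 : u < 1) :
    EI a b e u = ProbabilityTheory.beta b e / ProbabilityTheory.beta a (b + e - a) * EI b a (b + e - a) u := by
  refine (EI_series ha hb he hu0 hu1).unique ?_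
  refine ((EI_series hb ha hc hu0 hu1).mul_left _).congr_fun ?_ |> fun h => h
  intro k
  rw [beta_add hb he, beta_add ha hc, show a + (b + e - a) = b + e by ring]
  have := ProbabilityTheory.beta_pos ha hc
  field_simp

lemma Y1_eq {d : ℝ} (hd0 : 0 < d) (hd1 : d < 4 / 5) :
    ∫ u, u ^ (2 - 2 * d - 1) * EI d (3 - 3 * d) (1 - d) u ∂mI =
    ProbabilityTheory.beta (1 - d) (3 - 3 * d) / ProbabilityTheory.beta (4 - 5 * d) d *
      (ProbabilityTheory.beta (2 - 2 * d) (2 - 2 * d) / (4 - 5 * d) *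
      hyp3F2 (2 - 2 * d) (3 - 3 * d) (4 - 5 * d) (4 - 4 * d) (5 - 5 * d) 1) := by
  have hb : 0 < 3 - 3 * d := by linarith
  have he : 0 < 1 - d := by linarith
  have hg : 0 < 2 - 2 * d := by linarith
  have ha : 0 < 4 - 5 * d := by linarith
  set K := ProbabilityTheory.beta (1 - d) (3 - 3 * d) / ProbabilityTheory.beta (4 - 5 * d) d with hK
  have hKp : 0 < K := div_pos (ProbabilityTheory.beta_pos he hb) (ProbabilityTheory.beta_pos ha hd0)
  set f : ℝ → ℝ → ℝ := fun u x => u ^ (2 - 2 * d - 1) * (1 - u) ^ (2 - 2 * d - 1) *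
    (x ^ (4 - 5 * d - 1) * (1 - x) ^ (d - 1) * (1 - u * x) ^ (-(1 - d))) with hf
  have hfx : ∀ u, ∫ x, f u x ∂mI = u ^ (2 - 2 * d - 1) * (1 - u) ^ (2 - 2 * d - 1) * EI (1 - d) (4 - 5 * d) d u := by
    intro u
    rw [hf]
    exact integral_const_mul _ _
  have hE : ∀ u, 0 < u → u < 1 → u ^ (2 - 2 * d - 1) * EI d (3 - 3 * d) (1 - d) u = K * ∫ x, f u x ∂mI := by
    intro u h0 h1
    have h := EI_symm (u := u) ha he hb (by linarith) h0.le h1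
    rw [show 1 - d + (3 - 3 * d) - (4 - 5 * d) = d by ring] at h
    rw [EI_sub h0.le h1, show 3 - 3 * d + (1 - d) - d = 4 - 5 * d by ring, h, hfx,
      show 1 - d - d = 2 - 2 * d - 1 by ring]
    ring
  have hfu : ∀ x, 0 < x → x < 1 → ∫ u, f u x ∂mI = x ^ (4 - 5 * d - 1) * EI (3 - 3 * d) (2 - 2 * d) (2 - 2 * d) x := by
    intro x h0 h1
    rw [EI_sub h0.le h1, show 2 - 2 * d + (2 - 2 * d) - (3 - 3 * d) = 1 - d by ring,
      show 2 - 2 * d - (3 - 3 * d) = d - 1 by ring]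
    unfold EI
    rw [← integral_const_mul, ← integral_const_mul]
    refine integral_mI_congr fun u _ _ => ?_
    rw [hf, mul_comm x u]
    ring
  have hI : Integrable (Function.uncurry f) (mI.prod mI) := by
    refine tonelli ?_ ?_ ?_ ?_
    · apply Measurable.aestronglyMeasurable
      rw [hf]
      unfold Function.uncurry
      fun_prop
    · intro u v a b c e
      have h4 : 0 < 1 - u := by linarith
      have h5 : 0 < 1 - v := by linarith
      have h3 : 0 < 1 - u * v := by nlinarith
      rw [hf]
      positivity
    · intro u h0 h1
      exact (EI_int he.le ha hd0 h0.le h1).const_mul _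
    · refine ((EI_integrable hd0 (by linarith) hb he hg).const_mul K⁻¹).congr (ae_mI fun u h0 h1 => ?_)
      simp only
      rw [hE u h0 h1, inv_mul_cancel_left₀ hKp.ne']
  have hJ : Integrable (fun x => x ^ (4 - 5 * d - 1) * EI (3 - 3 * d) (2 - 2 * d) (2 - 2 * d) x) mI :=
    hI.integral_prod_right.congr (ae_mI fun x h0 h1 => hfu x h0 h1)
  have hS := EI_mom hb hg hg ha hJ
  rw [integral_mI_congr hE, integral_const_mul, integral_integral_swap hI, integral_mI_congr hfu,
    ← hS.tsum_eq]
  congr 1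
  unfold hyp3F2
  rw [← tsum_mul_left]
  refine tsum_congr fun n => ?_
  have e2 := beta_add hg hg n
  rw [show 2 - 2 * d + (2 - 2 * d) = 4 - 4 * d by ring] at e2
  have e3 := poch_shift (4 - 5 * d) n
  rw [show 4 - 5 * d + 1 = 5 - 5 * d by ring] at e3
  have p1 := poch_pos (a := 5 - 5 * d) (by linarith) n
  have p3 := poch_pos (a := 4 - 4 * d) (by linarith) n
  have p4 : 0 < 4 - 5 * d + n := by positivity
  have e4 : poch (4 - 5 * d) n = (4 - 5 * d) * poch (5 - 5 * d) n / (4 - 5 * d + n) := by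
    rw [eq_div_iff p4.ne', e3]
  rw [e2, e4, one_pow]
  have h3 : (n.factorial : ℝ) ≠ 0 := by positivity
  clear e2 e3 e4 hS hJ hI hfu hE hfx
  clear_value f K
  generalize ProbabilityTheory.beta (2 - 2 * d) (2 - 2 * d) = b1
  generalize 4 - 5 * d = b3 at *
  generalize poch (5 - 5 * d) n = q1 at *
  generalize poch (4 - 4 * d) n = q3 at *
  generalize poch (3 - 3 * d) n = q4 at *
  generalize poch (2 - 2 * d) n = q5 at *
  field_simp

theorem I2b_formula (d : ℝ) (hd0 : 0 < d) (hd1 : d < 4 / 5) (hd2 : d ≠ 1 / 2)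
    (B : ℝ)
    (hB : B = ∫ v in (0:ℝ)..1, ∫ u in (0:ℝ)..1,
      (1 - u) ^ (2 - 2 * d) * v ^ (1 - d) * (1 - v) ^ (2 - 3 * d) *
        (1 - u * v) ^ (5 * d - 5) * hyp2F1 d (2 * d - 1) (2 * d) u * hyp2F1 1 d (2 - d) v) :
    1 / (d - 1) * (Real.Gamma (1 - 2 * d) / Real.Gamma (2 - 2 * d)) * B
    = Real.Gamma (1 - d) * Real.Gamma (2 - 2 * d) * Real.Gamma (3 - 3 * d) *
        Real.Gamma (4 - 5 * d) /
        ((d - 1) * Real.Gamma (3 - 2 * d) * Real.Gamma (5 - 5 * d) * Real.Gamma (4 - 4 * d)) *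
        hyp4F3 1 d (2 - 2 * d) (3 - 3 * d) (2 - d) (3 - 2 * d) (4 - 4 * d) 1
      + Real.Gamma (1 - d) ^ 2 * Real.Gamma (2 - 2 * d) ^ 2 * Real.Gamma (2 * d - 1) *
          Real.Gamma (3 - 3 * d) /
          (Real.Gamma d ^ 2 * Real.Gamma (5 - 5 * d) * (4 - 5 * d) * Real.Gamma (4 - 4 * d)) *
          hyp3F2 (2 - 2 * d) (3 - 3 * d) (4 - 5 * d) (4 - 4 * d) (5 - 5 * d) 1 := by
  have he : 0 < 1 - d := by linarith
  have hg : 0 < 2 - 2 * d := by linarith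
  have ha : 0 < 4 - 5 * d := by linarith
  have hB2 : B = (1 - d) / (4 - 5 * d) * ((2 * d - 1) * ∫ u, phi d u * EI d (3 - 3 * d) (1 - d) u ∂mI) := by
    have h := stepC (φ := fun u => hyp2F1 d (2 * d - 1) (2 * d) u)
      (M := ‖2 * d - 1‖ * ∑' k : ℕ, |poch d k / k.factorial / (2 * d - 1 + k)|) hd0 hd1 ?_ ?_
    · rw [hB, intervalIntegral.integral_of_le zero_le_one, integral_Ioc_eq_integral_Ioo]
      simp only [intervalIntegral.integral_of_le zero_le_one, integral_Ioc_eq_integral_Ioo]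
      rw [h, ← integral_const_mul (2 * d - 1)]
      congr 1
      refine integral_mI_congr fun u _ _ => ?_
      rw [F_eq hd0 hd2]; ring
    · simp only [F_eq hd0 hd2]
      exact (phi_meas hd0 (by linarith) hd2).const_mul _
    · intro u h0 h1
      simp only [F_eq hd0 hd2, norm_mul]
      exact mul_le_mul_of_nonneg_left (phi_bdd hd0 (by linarith) hd2 h0 h1) (norm_nonneg _)
  rw [hB2, J_eq hd0 (by linarith) hd2, Y1_eq hd0 hd1]
  have h12 : 1 - 2 * d ≠ 0 := fun h => hd2 (by linarith)
  have g1 : Gamma (2 - 2 * d) = (1 - 2 * d) * Gamma (1 - 2 * d) := by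
    rw [← Real.Gamma_add_one h12]; congr 1; ring
  have g2 : Gamma (5 - 5 * d) = (4 - 5 * d) * Gamma (4 - 5 * d) := by
    rw [← Real.Gamma_add_one ha.ne']; congr 1; ring
  have g3 : Gamma (3 - 2 * d) = (2 - 2 * d) * Gamma (2 - 2 * d) := by
    rw [← Real.Gamma_add_one hg.ne']; congr 1; ring
  have p1 := Gamma_pos_of_pos hg
  have p2 := Gamma_pos_of_pos ha
  have p3 := Gamma_pos_of_pos he
  have p4 := Gamma_pos_of_pos hd0
  have p5 := Gamma_pos_of_pos (show 0 < 3 - 3 * d by linarith)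
  have p6 := Gamma_pos_of_pos (show 0 < 4 - 4 * d by linarith)
  have g4 : Gamma (1 - 2 * d) = Gamma (2 - 2 * d) / (1 - 2 * d) := by
    rw [eq_div_iff h12, g1]; ring
  have hq : 1 / (d - 1) * (Gamma (1 - 2 * d) / Gamma (2 - 2 * d)) * ((1 - d) / (4 - 5 * d)) * (2 * d - 1)
      = 1 / (4 - 5 * d) := by
    have : d - 1 ≠ 0 := by linarith
    have e : Gamma (1 - 2 * d) / Gamma (2 - 2 * d) = 1 / (1 - 2 * d) := by
      rw [g4, div_right_comm, div_self p1.ne']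
    rw [e, show d - 1 = -(1 - d) by ring, show 2 * d - 1 = -(1 - 2 * d) by ring]
    generalize 1 - 2 * d = a1 at *
    generalize 1 - d = a2 at *
    generalize 4 - 5 * d = a3 at *
    field_simp
  have hr : ∀ X : ℝ, 1 / (d - 1) * (Gamma (1 - 2 * d) / Gamma (2 - 2 * d)) *
      ((1 - d) / (4 - 5 * d) * ((2 * d - 1) * X)) = 1 / (4 - 5 * d) * X := by
    intro X; rw [← hq]; ring
  rw [hr]
  unfold ProbabilityTheory.beta
  rw [g2, g3, show 1 - d + (3 - 3 * d) = 4 - 4 * d by ring, show 4 - 5 * d + d = 4 - 4 * d by ring,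
    show 2 - 2 * d + (2 - 2 * d) = 4 - 4 * d by ring, show 3 - 3 * d + (1 - d) = 4 - 4 * d by ring,
    show d - 1 = -(1 - d) by ring]
  generalize hyp4F3 1 d (2 - 2 * d) (3 - 3 * d) (2 - d) (3 - 2 * d) (4 - 4 * d) 1 = H4
  generalize hyp3F2 (2 - 2 * d) (3 - 3 * d) (4 - 5 * d) (4 - 4 * d) (5 - 5 * d) 1 = H3
  clear hB2 hr hq g1 g2 g3 g4 hB
  generalize Gamma (2 - 2 * d) = G1 at *
  generalize Gamma (4 - 5 * d) = G2 at *
  generalize Gamma (1 - d) = G3 at *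
  generalize Gamma d = G4 at *
  generalize Gamma (3 - 3 * d) = G5 at *
  generalize Gamma (4 - 4 * d) = G6 at *
  generalize Gamma (2 * d - 1) = G7 at *
  generalize 2 - 2 * d = a1 at *
  generalize 4 - 5 * d = a2 at *
  generalize 1 - d = a3 at *
  field_simp
  ring
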